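/- arXiv:2311.15833 — 2 statements merged into one kernel-verified Lean document; each statement's English description precedes it below -/
import Mathlib

section
/- Let λ, p, q, r, P, Q, S be real numbers with p·q − r² = 1 and p·Q + q·P = 2·r·S. Define the 2×2 real matrices G := [[p, r], [r, q]] and A := [[P + 2λp, S], [S, Q − 2λq]]. Then the trace of A·G⁻¹·A·G⁻¹ equals 8·(r² + 1)·λ² + 8·(r·S − p·Q)·λ + 2·(S² − P·Q). -/
/-!
By Cayley–Hamilton, `tr M² = (tr M)² - 2 det M` for a 2 × 2 matrix `M`; apply this to
`M = A * G⁻¹`. Write `A = G' + 2λ K`, with `G' = [[P, S], [S, Q]]` and `K = diag(p, -q)`. Then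
`tr (G' * G⁻¹)` is the logarithmic derivative of the constant `det G`, and `tr (K * G⁻¹)` is
`p * q - q * p`, so `tr M = 0`. As `det M = det A`, the energy density is `-2 det A`.
-/

section CardEqTwo

variable {R n : Type*} [CommRing R] [Fintype n] [DecidableEq n]

theorem trace_sq_of_card_eq_two (M : Matrix n n R) (hn : Fintype.card n = 2) :
    (M ^ 2).trace = M.trace ^ 2 - 2 * M.det := by
  nontriviality R
  have cayley_hamilton : M ^ 2 - M.trace • M + M.det • (1 : Matrix n n R) = 0 := by
    simpa [M.charpoly_of_card_eq_two hn, Algebra.smul_def] using M.aeval_self_charpoly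
  have trace_eq := congrArg Matrix.trace cayley_hamilton
  simp only [Matrix.trace_add, Matrix.trace_sub, Matrix.trace_smul, Matrix.trace_one, hn,
    smul_eq_mul, Nat.cast_ofNat, Matrix.trace_zero] at trace_eq
  linear_combination trace_eq

theorem trace_mul_inv_mul_mul_inv_of_det_eq_one (A : Matrix n n R) {G : Matrix n n R}
    (hn : Fintype.card n = 2) (hG : G.det = 1) :
    (A * G⁻¹ * A * G⁻¹).trace = (A * G.adjugate).trace ^ 2 - 2 * A.det := by
  have inv_eq : G⁻¹ = G.adjugate := by
    rw [Matrix.inv_def, hG, Ring.inverse_one, one_smul]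
  have det_eq : (A * G.adjugate).det = A.det := by
    rw [Matrix.det_mul, Matrix.det_adjugate, hG, one_pow, mul_one]
  rw [inv_eq, mul_assoc (A * G.adjugate), ← sq, trace_sq_of_card_eq_two _ hn, det_eq]

end CardEqTwo

theorem trace_mul_adjugate_fin_two {R : Type*} [CommRing R] (A G : Matrix (Fin 2) (Fin 2) R) :
    (A * G.adjugate).trace = A 0 0 * G 1 1 + A 1 1 * G 0 0 - A 0 1 * G 1 0 - A 1 0 * G 0 1 := by
  rw [Matrix.adjugate_fin_two, Matrix.trace_fin_two]
  simp only [Matrix.mul_apply, Fin.sum_univ_two, Matrix.of_apply, Matrix.cons_val_zero,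
    Matrix.cons_val_one]
  ring

theorem chern_hamilton_energy_density_general {R : Type*} [CommRing R] (l p q r P Q S : R)
    (h1 : p * q - r ^ 2 = 1) (h2 : p * Q + q * P = 2 * r * S)
    (G A : Matrix (Fin 2) (Fin 2) R)
    (hG : G = !![p, r; r, q])
    (hA : A = !![P + 2 * l * p, S; S, Q - 2 * l * q]) :
    (A * G⁻¹ * A * G⁻¹).trace =
      8 * (r ^ 2 + 1) * l ^ 2 + 8 * (r * S - p * Q) * l + 2 * (S ^ 2 - P * Q) := by
  have det_G : G.det = 1 := by
    rw [hG, Matrix.det_fin_two_of, ← sq, h1]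
  have trace_eq_zero : (A * G.adjugate).trace = 0 := by
    rw [trace_mul_adjugate_fin_two, hA, hG]
    simp only [Matrix.of_apply, Matrix.cons_val', Matrix.cons_val_zero, Matrix.cons_val_one,
      Matrix.cons_val_fin_one]
    linear_combination h2
  have det_A : A.det = (P + 2 * l * p) * (Q - 2 * l * q) - S ^ 2 := by
    rw [hA, Matrix.det_fin_two_of, ← sq]
  rw [trace_mul_inv_mul_mul_inv_of_det_eq_one A (Fintype.card_fin 2) det_G, trace_eq_zero, det_A]
  linear_combination 8 * l ^ 2 * h1 + 4 * l * h2

/-- Chern–Hamilton energy density identity: for reals with `p*q - r² = 1` and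
`p*Q + q*P = 2*r*S`, with `G = [[p,r],[r,q]]` and `A = [[P+2λp, S],[S, Q-2λq]]`,
one has `tr(A G⁻¹ A G⁻¹) = 8(r²+1)λ² + 8(rS - pQ)λ + 2(S² - PQ)`. -/
theorem chern_hamilton_energy_density (l p q r P Q S : ℝ)
    (h1 : p * q - r ^ 2 = 1) (h2 : p * Q + q * P = 2 * r * S)
    (G A : Matrix (Fin 2) (Fin 2) ℝ)
    (hG : G = !![p, r; r, q])
    (hA : A = !![P + 2 * l * p, S; S, Q - 2 * l * q]) :
    (A * G⁻¹ * A * G⁻¹).trace =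
      8 * (r ^ 2 + 1) * l ^ 2 + 8 * (r * S - p * Q) * l + 2 * (S ^ 2 - P * Q) :=
  chern_hamilton_energy_density_general l p q r P Q S h1 h2 G A hG hA
end

section
/- Let (X, 𝒜, μ) be a finite measure space, let λ be a real number, and let u, r, S : X → ℝ be measurable functions such that u is integrable with ∫ u dμ = 0 and such that the function F := (r² + 1)·λ² + ((r² + 1)·u − r·S)·λ + (1/4)·(r·u − S)² + (1/4)·u² is integrable. Then ∫ F dμ ≥ λ² · μ(X). -/
open MeasureTheory

/-!
The energy density is a sum of two squares, `F = (λ + u/2)² + (rλ + (ru - S)/2)²`, so it exceeds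
`λu` by at least `λ²` everywhere. Markov's inequality then bounds `∫ (F - λu)` below by `λ² μ(X)`,
and the term `λ ∫ u` vanishes.
-/

/-- The normalized Chern–Hamilton energy density `F`, up to terms integrating to zero, at a point
where a competing compatible metric with parameters `p`, `r` has Reeb derivatives `u = R (ln p)` and
`S = R r`; `l` is the constant `λ` of the critical metric. -/
noncomputable def energyDensity (l u r S : ℝ) : ℝ :=
  (r ^ 2 + 1) * l ^ 2 + ((r ^ 2 + 1) * u - r * S) * l
    + (1 / 4) * (r * u - S) ^ 2 + (1 / 4) * u ^ 2

theorem energyDensity_eq_sq_add_sq (l u r S : ℝ) :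
    energyDensity l u r S = (l + u / 2) ^ 2 + (r * l + (r * u - S) / 2) ^ 2 := by
  unfold energyDensity
  ring

theorem sq_le_energyDensity_sub_mul (l u r S : ℝ) :
    l ^ 2 ≤ energyDensity l u r S - l * u := by
  rw [energyDensity_eq_sq_add_sq]
  linear_combination sq_nonneg (u / 2) + sq_nonneg (r * l + (r * u - S) / 2)

section

variable {X : Type*} [MeasurableSpace X] {μ : Measure X}

-- If `0 < c` then `μ` is finite, so the junk value `μ.real univ = 0` of an infinite
-- measure can arise only when `c = 0`.
theorem const_mul_measureReal_univ_le_integral {c : ℝ} {g : X → ℝ} (hc : 0 ≤ c)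
    (hcg : ∀ᵐ x ∂μ, c ≤ g x) (hg : Integrable g μ) : c * μ.real Set.univ ≤ ∫ x, g x ∂μ := by
  have superlevel_ae_univ : {x | c ≤ g x} =ᵐ[μ] Set.univ := Filter.eventuallyEq_univ.2 hcg
  rw [← measureReal_congr superlevel_ae_univ]
  exact mul_meas_ge_le_integral_of_nonneg (hcg.mono fun _ ↦ hc.trans) hg c

theorem integrated_energy_comparison_general {l : ℝ} {u r S : X → ℝ} (hu : Integrable u μ)
    (hF : Integrable (fun x ↦ energyDensity l (u x) (r x) (S x)) μ) :
    l ^ 2 * μ.real Set.univ + l * ∫ x, u x ∂μ ≤ ∫ x, energyDensity l (u x) (r x) (S x) ∂μ := by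
  rw [← le_sub_iff_add_le, ← integral_const_mul, ← integral_sub hF (hu.const_mul l)]
  exact const_mul_measureReal_univ_le_integral (sq_nonneg l)
    (ae_of_all μ fun x ↦ sq_le_energyDensity_sub_mul l (u x) (r x) (S x))
    (hF.sub (hu.const_mul l))

end

/-- Integrated energy comparison: on a finite measure space, if `u` is integrable with
`∫ u dμ = 0` and `F = (r²+1)λ² + ((r²+1)u - rS)λ + ¼(ru - S)² + ¼u²` is integrable,
then `∫ F dμ ≥ λ² · μ(X)`. -/
theorem integrated_energy_comparison {X : Type*} [MeasurableSpace X]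
    (μ : Measure X) [IsFiniteMeasure μ] (l : ℝ) (u r S : X → ℝ)
    (hu : Measurable u) (hr : Measurable r) (hS : Measurable S)
    (hui : Integrable u μ) (hu0 : ∫ x, u x ∂μ = 0)
    (F : X → ℝ)
    (hF : F = fun x => (r x ^ 2 + 1) * l ^ 2 + ((r x ^ 2 + 1) * u x - r x * S x) * l
      + (1 / 4) * (r x * u x - S x) ^ 2 + (1 / 4) * u x ^ 2)
    (hFi : Integrable F μ) :
    l ^ 2 * (μ Set.univ).toReal ≤ ∫ x, F x ∂μ := by
  subst hF
  simpa only [energyDensity, measureReal_def, hu0, mul_zero, add_zero] using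
    integrated_energy_comparison_general hui hFi
end
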